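/- The function f(α) = η(α)/(Φ⁻¹(α))², where η(α) = ((1-2α)/2) ln((1-α)/α), is monotonically increasing on the interval (0, 1/2). -/

import Mathlib

open Real Set Filter Topology

noncomputable def phi (y : ℝ) : ℝ := (Real.sqrt (2 * Real.pi))⁻¹ * Real.exp (-y ^ 2 / 2)

noncomputable def Phi (x : ℝ) : ℝ := ∫ y in Set.Iic x, phi y

noncomputable def PhiInv (a : ℝ) : ℝ := Function.invFun Phi a

/-!
Put `x = -Φ⁻¹(α) > 0` and `A = 1 - 2α = P(|Z| ≤ x)` for a standard normal `Z`. Then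
`f(α) = A artanh A / x²`, so `f` increases in `α` as soon as `A artanh A` has elasticity at most `2`
in `x`. The elasticity `ε = x A' / A` takes values in `(0, 1]` and satisfies
`x ε' = ε (1 - x² - ε)`, so that rational expressions in `x`, `A` and `ε` have derivatives of the
same kind. The bound on the elasticity of `A artanh A` reads `t₀ ≤ artanh A` with
`t₀ = ε A / ((1 - A²) (2 - ε))`. Both sides vanish as `x → 0`, and differentiating eliminates
`artanh`: the derivative of `artanh A - t₀` has the sign of `x² + (1 - ε)² - (1 + x²) A²`. Finally,
the ratio of `x² + (1 - ε)²` to `(1 + x²) A²` is decreasing and is bounded below by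
`x² / (1 + x²)`, which tends to `1`, so it is at least `1`.
-/

lemma antitoneOn_of_hasDerivAt_nonpos {D : Set ℝ} (hD : Convex ℝ D) {f f' : ℝ → ℝ}
    (hf : ∀ x ∈ D, HasDerivAt f (f' x) x) (hf' : ∀ x ∈ D, f' x ≤ 0) : AntitoneOn f D :=
  antitoneOn_of_hasDerivWithinAt_nonpos hD (fun x hx => (hf x hx).continuousAt.continuousWithinAt)
    (fun x hx => (hf x (interior_subset hx)).hasDerivWithinAt)
    (fun x hx => hf' x (interior_subset hx))

lemma hasDerivAt_integral_Iic {E : Type*} [NormedAddCommGroup E] [NormedSpace ℝ E]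
    [CompleteSpace E] {f : ℝ → E} (hf : MeasureTheory.Integrable f) {x : ℝ}
    (hx : ContinuousAt f x) : HasDerivAt (fun y => ∫ t in Iic y, f t) (f x) x := by
  have hsplit : (fun y => ∫ t in Iic y, f t) = fun y => (∫ t in Iic x, f t) + ∫ t in x..y, f t := by
    ext y
    rw [← intervalIntegral.integral_Iic_sub_Iic hf.integrableOn hf.integrableOn, add_sub_cancel]
  rw [hsplit]
  exact (intervalIntegral.integral_hasDerivAt_right (by simp)
    hf.aestronglyMeasurable.stronglyMeasurableAtFilter hx).const_add _

lemma two_nsmul_integral_Iic_zero {E : Type*} [NormedAddCommGroup E] [NormedSpace ℝ E]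
    {f : ℝ → E} (hf : MeasureTheory.Integrable f) (heven : Function.Even f) :
    2 • ∫ x in Iic 0, f x = ∫ x, f x := by
  have hsymm : ∫ x in Iic 0, f x = ∫ x in Ioi 0, f x := by
    simpa only [heven _, neg_zero] using integral_comp_neg_Iic (0 : ℝ) f
  rw [← intervalIntegral.integral_Iic_add_Ioi hf.integrableOn hf.integrableOn, ← hsymm, two_nsmul]

lemma hasDerivAt_artanh {y : ℝ} (hy : y ∈ Ioo (-1) 1) :
    HasDerivAt artanh (1 / (1 - y ^ 2)) y := by
  have hnum : 0 < 1 + y := by linarith [hy.1]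
  have hden : 0 < 1 - y := by linarith [hy.2]
  have hlog : artanh =ᶠ[𝓝 y] fun z => (log (1 + z) - log (1 - z)) / 2 := by
    filter_upwards [isOpen_Ioo.mem_nhds hy] with z hz
    rw [artanh_eq_half_log (Ioo_subset_Icc_self hz),
      log_div (by linarith [hz.1]) (by linarith [hz.2])]
    ring
  have hderiv := (((hasDerivAt_id' y).const_add 1).log hnum.ne').sub
    (((hasDerivAt_id' y).const_sub 1).log hden.ne')
  refine ((hderiv.div_const 2).congr_of_eventuallyEq hlog).congr_deriv ?_
  rw [show 1 - y ^ 2 = (1 + y) * (1 - y) by ring]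
  field_simp
  ring

lemma mul_artanh_one_sub_two_mul {α : ℝ} (hα : α ∈ Ioo 0 1) :
    (1 - 2 * α) * artanh (1 - 2 * α) = (1 - 2 * α) / 2 * log ((1 - α) / α) := by
  have hodds : (1 + (1 - 2 * α)) / (1 - (1 - 2 * α)) = (1 - α) / α := by
    rw [show 1 + (1 - 2 * α) = 2 * (1 - α) by ring, show 1 - (1 - 2 * α) = 2 * α by ring,
      mul_div_mul_left _ _ two_ne_zero]
  rw [artanh_eq_half_log ⟨by linarith [hα.2], by linarith [hα.1]⟩, hodds]
  ring

lemma phi_eq_gaussianPDFReal : phi = ProbabilityTheory.gaussianPDFReal 0 1 := by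
  ext x
  simp [phi, ProbabilityTheory.gaussianPDFReal]

lemma phi_pos (x : ℝ) : 0 < phi x := by
  rw [phi_eq_gaussianPDFReal]
  exact ProbabilityTheory.gaussianPDFReal_pos 0 1 x one_ne_zero

lemma integrable_phi : MeasureTheory.Integrable phi := by
  rw [phi_eq_gaussianPDFReal]
  exact ProbabilityTheory.integrable_gaussianPDFReal 0 1

lemma integral_phi : ∫ x, phi x = 1 := by
  rw [phi_eq_gaussianPDFReal]
  exact ProbabilityTheory.integral_gaussianPDFReal_eq_one 0 one_ne_zero

lemma even_phi : Function.Even phi := fun x => by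
  simp only [phi, neg_sq]

lemma hasDerivAt_phi (x : ℝ) : HasDerivAt phi (-x * phi x) x := by
  have hexponent : HasDerivAt (fun y : ℝ => -y ^ 2 / 2) (-x) x :=
    ((hasDerivAt_pow 2 x).neg.div_const 2).congr_deriv (by norm_num; ring)
  exact (hexponent.exp.const_mul _).congr_deriv (by rw [phi]; ring)

lemma hasDerivAt_Phi (x : ℝ) : HasDerivAt Phi (phi x) x :=
  hasDerivAt_integral_Iic integrable_phi (hasDerivAt_phi x).continuousAt

lemma strictMono_Phi : StrictMono Phi :=
  strictMono_of_hasDerivAt_pos hasDerivAt_Phi phi_pos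

lemma Phi_pos (x : ℝ) : 0 < Phi x :=
  (MeasureTheory.integral_nonneg fun y => (phi_pos y).le).trans_lt
    (strictMono_Phi (sub_one_lt x))

lemma Phi_zero : Phi 0 = 1 / 2 := by
  have htwo := two_nsmul_integral_Iic_zero integrable_phi even_phi
  rw [integral_phi, nsmul_eq_mul, Nat.cast_ofNat] at htwo
  rw [Phi]
  linarith

lemma tendsto_Phi_atBot : Tendsto Phi atBot (𝓝 0) :=
  MeasureTheory.tendsto_integral_Iic_zero tendsto_id

lemma PhiInv_Phi (x : ℝ) : PhiInv (Phi x) = x :=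
  Function.leftInverse_invFun strictMono_Phi.injective x

lemma exists_pos_Phi_neg_eq {α : ℝ} (hα : α ∈ Ioo 0 (1 / 2)) : ∃ x, 0 < x ∧ Phi (-x) = α := by
  have hcont : Continuous Phi :=
    continuous_iff_continuousAt.2 fun x => (hasDerivAt_Phi x).continuousAt
  obtain ⟨y, hy⟩ := (tendsto_Phi_atBot.eventually_lt_const hα.1).exists
  obtain ⟨z, rfl⟩ := mem_range_of_exists_le_of_exists_ge hcont ⟨y, hy.le⟩ ⟨0, Phi_zero ▸ hα.2.le⟩
  have hz : z < 0 := strictMono_Phi.lt_iff_lt.1 (Phi_zero ▸ hα.2)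
  exact ⟨-z, neg_pos.2 hz, by rw [neg_neg]⟩

/-- The probability `P(|Z| ≤ x)` that a standard normal variable lies in `[-x, x]`, for
`0 ≤ x`; it equals `1 - 2 * α` when `-x` is the `α`-quantile. -/
noncomputable def centralMass (x : ℝ) : ℝ := 1 - 2 * Phi (-x)

/-- The elasticity `x * A' / A` of `A = centralMass` at `x`, which measures logarithmic slopes in
powers of `x`. The value at `0` is the junk `0 / 0 = 0` rather than the limit `1`. -/
noncomputable def massElasticity (x : ℝ) : ℝ := 2 * x * phi x / centralMass x

section CentralMass

variable {x : ℝ}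

lemma hasDerivAt_centralMass (x : ℝ) : HasDerivAt centralMass (2 * phi x) x :=
  ((((hasDerivAt_Phi (-x)).comp x (hasDerivAt_neg x)).const_mul 2).const_sub 1).congr_deriv
    (by rw [even_phi]; ring)

lemma centralMass_zero : centralMass 0 = 0 := by
  rw [centralMass, neg_zero, Phi_zero]
  norm_num

lemma strictMono_centralMass : StrictMono centralMass :=
  strictMono_of_hasDerivAt_pos hasDerivAt_centralMass fun x => mul_pos two_pos (phi_pos x)

lemma centralMass_mem_Ioo (hx : 0 < x) : centralMass x ∈ Ioo 0 1 :=
  ⟨centralMass_zero ▸ strictMono_centralMass hx, by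
    rw [centralMass]
    linarith [Phi_pos (-x)]⟩

lemma one_sub_centralMass_sq_pos (hx : 0 < x) : 0 < 1 - centralMass x ^ 2 := by
  obtain ⟨hA, hA'⟩ := centralMass_mem_Ioo hx
  exact sub_pos.2 (pow_lt_one₀ hA.le hA' two_ne_zero)

lemma two_mul_mul_phi_le_centralMass (hx : 0 ≤ x) : 2 * x * phi x ≤ centralMass x := by
  have hanti : Antitone fun y => 2 * y * phi y - centralMass y :=
    antitone_of_hasDerivAt_nonpos (f' := fun y => -(2 * y ^ 2 * phi y))
      (fun y => ((((hasDerivAt_id' y).const_mul 2).mul (hasDerivAt_phi y)).sub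
        (hasDerivAt_centralMass y)).congr_deriv (by ring))
      (fun y => neg_nonpos.2 (mul_nonneg (by positivity) (phi_pos y).le))
  simpa [centralMass_zero] using hanti hx

lemma massElasticity_pos (hx : 0 < x) : 0 < massElasticity x :=
  div_pos (mul_pos (mul_pos two_pos hx) (phi_pos x)) (centralMass_mem_Ioo hx).1

lemma massElasticity_le_one (hx : 0 < x) : massElasticity x ≤ 1 :=
  div_le_one_of_le₀ (two_mul_mul_phi_le_centralMass hx.le) (centralMass_mem_Ioo hx).1.le

lemma hasDerivAt_centralMass_elasticity (hx : 0 < x) :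
    HasDerivAt centralMass (massElasticity x * centralMass x / x) x := by
  have hA := (centralMass_mem_Ioo hx).1
  refine (hasDerivAt_centralMass x).congr_deriv ?_
  rw [massElasticity]
  field_simp

lemma hasDerivAt_massElasticity (hx : 0 < x) :
    HasDerivAt massElasticity (massElasticity x * (1 - x ^ 2 - massElasticity x) / x) x := by
  have hA := (centralMass_mem_Ioo hx).1
  refine ((((hasDerivAt_id' x).const_mul 2).mul (hasDerivAt_phi x)).fun_div
    (hasDerivAt_centralMass x) hA.ne').congr_deriv ?_
  simp only [massElasticity, Pi.mul_apply]
  field_simp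
  ring

lemma hasDerivAt_artanh_centralMass (hx : 0 < x) :
    HasDerivAt (fun y => artanh (centralMass y))
      (massElasticity x * centralMass x / (x * (1 - centralMass x ^ 2))) x := by
  have hA := centralMass_mem_Ioo hx
  refine ((hasDerivAt_artanh ⟨by linarith [hA.1], hA.2⟩).comp x
    (hasDerivAt_centralMass_elasticity hx)).congr_deriv ?_
  rw [div_mul_div_comm, one_mul, mul_comm x]

end CentralMass

/-- The value of `t` for which the elasticity `ε + ε * A / ((1 - A ^ 2) * t)` of `A * artanh A`,
with `t` in place of `artanh A`, is exactly `2`; here `A = centralMass x` and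
`ε = massElasticity x`. -/
noncomputable def criticalArtanh (x : ℝ) : ℝ :=
  massElasticity x * centralMass x / ((1 - centralMass x ^ 2) * (2 - massElasticity x))

/-- The two sides of the inequality `(1 + x ^ 2) * A ^ 2 ≤ x ^ 2 + (1 - ε) ^ 2` that governs the
sign of the derivative of `artanh A - criticalArtanh x`, as a quotient. -/
noncomputable def comparisonRatio (x : ℝ) : ℝ :=
  (x ^ 2 + (1 - massElasticity x) ^ 2) / ((1 + x ^ 2) * centralMass x ^ 2)

section Comparison

variable {x : ℝ}

lemma hasDerivAt_comparisonRatio (hx : 0 < x) :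
    HasDerivAt comparisonRatio
      (-(2 * massElasticity x * (massElasticity x * (x ^ 2 - (1 - massElasticity x)) ^ 2
          + (1 - massElasticity x) ^ 2 * (2 - massElasticity x))
        / (x * (1 + x ^ 2) ^ 2 * centralMass x ^ 2))) x := by
  have hA := (centralMass_mem_Ioo hx).1
  have hsq := hasDerivAt_pow 2 x
  have hnum := hsq.add (((hasDerivAt_massElasticity hx).const_sub 1).pow 2)
  have hden := (hsq.const_add 1).mul ((hasDerivAt_centralMass_elasticity hx).pow 2)
  refine (hnum.fun_div hden
    (by simp only [Pi.mul_apply, Pi.pow_apply]; positivity)).congr_deriv ?_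
  simp only [Pi.add_apply, Pi.mul_apply, Pi.pow_apply]
  field_simp
  ring

lemma antitoneOn_comparisonRatio : AntitoneOn comparisonRatio (Ioi 0) := by
  refine antitoneOn_of_hasDerivAt_nonpos (convex_Ioi 0)
    (fun x hx => hasDerivAt_comparisonRatio hx) fun x (hx : 0 < x) => neg_nonpos.2 ?_
  have hε := massElasticity_pos hx
  have hε' : 0 ≤ 2 - massElasticity x := by linarith [massElasticity_le_one hx]
  positivity

lemma sq_div_one_add_sq_le_comparisonRatio (hx : 0 < x) :
    x ^ 2 / (1 + x ^ 2) ≤ comparisonRatio x := by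
  obtain ⟨hA, hA'⟩ := centralMass_mem_Ioo hx
  refine div_le_div₀ (by positivity) (le_add_of_nonneg_right (sq_nonneg _)) (by positivity) ?_
  exact mul_le_of_le_one_right (by positivity) (pow_le_one₀ hA.le hA'.le)

lemma tendsto_sq_div_one_add_sq_atTop :
    Tendsto (fun x : ℝ => x ^ 2 / (1 + x ^ 2)) atTop (𝓝 1) := by
  have hinv : Tendsto (fun x : ℝ => 1 - (1 + x ^ 2)⁻¹) atTop (𝓝 (1 - 0)) :=
    (tendsto_atTop_add_const_left atTop 1
      (tendsto_pow_atTop two_ne_zero)).inv_tendsto_atTop.const_sub 1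
  rw [sub_zero] at hinv
  refine hinv.congr fun x => ?_
  field_simp
  ring

lemma one_le_comparisonRatio (hx : 0 < x) : 1 ≤ comparisonRatio x := by
  refine le_of_tendsto tendsto_sq_div_one_add_sq_atTop ?_
  filter_upwards [eventually_ge_atTop x] with z hz
  have hz0 : 0 < z := hx.trans_le hz
  exact (sq_div_one_add_sq_le_comparisonRatio hz0).trans (antitoneOn_comparisonRatio hx hz0 hz)

lemma one_add_sq_mul_centralMass_sq_le (hx : 0 < x) :
    (1 + x ^ 2) * centralMass x ^ 2 ≤ x ^ 2 + (1 - massElasticity x) ^ 2 := by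
  have hA := (centralMass_mem_Ioo hx).1
  exact (one_le_div₀ (by positivity)).1 (one_le_comparisonRatio hx)

lemma hasDerivAt_criticalArtanh_sub_artanh (hx : 0 < x) :
    HasDerivAt (fun y => criticalArtanh y - artanh (centralMass y))
      (-(2 * massElasticity x * centralMass x
          * (x ^ 2 + (1 - massElasticity x) ^ 2 - (1 + x ^ 2) * centralMass x ^ 2)
        / (x * ((1 - centralMass x ^ 2) * (2 - massElasticity x)) ^ 2))) x := by
  have hA := one_sub_centralMass_sq_pos hx
  have hε : 0 < 2 - massElasticity x := by linarith [massElasticity_le_one hx]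
  have hAd := hasDerivAt_centralMass_elasticity hx
  have hεd := hasDerivAt_massElasticity hx
  have hquot := (hεd.mul hAd).fun_div (((hAd.pow 2).const_sub 1).mul (hεd.const_sub 2))
    (by simp only [Pi.mul_apply, Pi.pow_apply]; positivity)
  refine (hquot.sub (hasDerivAt_artanh_centralMass hx)).congr_deriv ?_
  simp only [Pi.mul_apply, Pi.pow_apply]
  field_simp
  ring

lemma antitoneOn_criticalArtanh_sub_artanh :
    AntitoneOn (fun x => criticalArtanh x - artanh (centralMass x)) (Ioi 0) := by
  refine antitoneOn_of_hasDerivAt_nonpos (convex_Ioi 0)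
    (fun x hx => hasDerivAt_criticalArtanh_sub_artanh hx) fun x (hx : 0 < x) => neg_nonpos.2 ?_
  have hA := (centralMass_mem_Ioo hx).1
  have hε := massElasticity_pos hx
  have hcmp := sub_nonneg.2 (one_add_sq_mul_centralMass_sq_le hx)
  positivity

lemma criticalArtanh_le_centralMass_div (hx : 0 < x) :
    criticalArtanh x ≤ centralMass x / (1 - centralMass x ^ 2) := by
  have hA := (centralMass_mem_Ioo hx).1
  have hA' := one_sub_centralMass_sq_pos hx
  have hε := massElasticity_le_one hx
  refine div_le_div₀ hA.le (mul_le_of_le_one_left hA.le hε) hA' ?_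
  exact le_mul_of_one_le_right hA'.le (by linarith)

lemma criticalArtanh_le_artanh (hx : 0 < x) :
    criticalArtanh x ≤ artanh (centralMass x) := by
  have hcont : ContinuousAt centralMass 0 := (hasDerivAt_centralMass 0).continuousAt
  have hlim : Tendsto (fun z => centralMass z / (1 - centralMass z ^ 2)) (𝓝[>] 0) (𝓝 0) := by
    have hdiv : ContinuousAt (fun z => centralMass z / (1 - centralMass z ^ 2)) 0 :=
      hcont.div (continuousAt_const.sub (hcont.pow 2)) (by simp [centralMass_zero])
    simpa [centralMass_zero] using hdiv.tendsto.mono_left (nhdsWithin_le_nhds (s := Ioi 0))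
  refine sub_nonpos.1 (ge_of_tendsto hlim ?_)
  filter_upwards [Ioc_mem_nhdsGT hx] with z ⟨hz, hzx⟩
  calc criticalArtanh x - artanh (centralMass x)
      ≤ criticalArtanh z - artanh (centralMass z) :=
        antitoneOn_criticalArtanh_sub_artanh hz hx hzx
    _ ≤ criticalArtanh z := sub_le_self _ (artanh_nonneg (centralMass_mem_Ioo hz).1.le)
    _ ≤ centralMass z / (1 - centralMass z ^ 2) := criticalArtanh_le_centralMass_div hz

lemma hasDerivAt_centralMass_mul_artanh_div_sq (hx : 0 < x) :
    HasDerivAt (fun y => centralMass y * artanh (centralMass y) / y ^ 2)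
      (-(centralMass x * (2 - massElasticity x) * (artanh (centralMass x) - criticalArtanh x)
        / x ^ 3)) x := by
  have hA := one_sub_centralMass_sq_pos hx
  have hε : 0 < 2 - massElasticity x := by linarith [massElasticity_le_one hx]
  refine (((hasDerivAt_centralMass_elasticity hx).mul (hasDerivAt_artanh_centralMass hx)).fun_div
    (hasDerivAt_pow 2 x) (by positivity)).congr_deriv ?_
  simp only [criticalArtanh, Pi.mul_apply]
  field_simp
  ring

lemma antitoneOn_centralMass_mul_artanh_div_sq :
    AntitoneOn (fun x => centralMass x * artanh (centralMass x) / x ^ 2) (Ioi 0) := by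
  refine antitoneOn_of_hasDerivAt_nonpos (convex_Ioi 0)
    (fun x hx => hasDerivAt_centralMass_mul_artanh_div_sq hx)
    fun x (hx : 0 < x) => neg_nonpos.2 ?_
  have hA := (centralMass_mem_Ioo hx).1
  have hε : 0 ≤ 2 - massElasticity x := by linarith [massElasticity_le_one hx]
  have hcrit := sub_nonneg.2 (criticalArtanh_le_artanh hx)
  positivity

end Comparison

theorem f_monotone :
    MonotoneOn
      (fun α : ℝ => ((1 - 2 * α) / 2 * Real.log ((1 - α) / α)) / (PhiInv α) ^ 2)
      (Set.Ioo 0 (1 / 2)) := by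
  have heq (x : ℝ) (hα : Phi (-x) ∈ Ioo 0 (1 / 2)) :
      (1 - 2 * Phi (-x)) / 2 * log ((1 - Phi (-x)) / Phi (-x)) / PhiInv (Phi (-x)) ^ 2
        = centralMass x * artanh (centralMass x) / x ^ 2 := by
    rw [PhiInv_Phi, neg_sq, centralMass, mul_artanh_one_sub_two_mul ⟨hα.1, by linarith [hα.2]⟩]
  intro α hα β hβ hαβ
  obtain ⟨x, hx, rfl⟩ := exists_pos_Phi_neg_eq hα
  obtain ⟨y, hy, rfl⟩ := exists_pos_Phi_neg_eq hβ
  have hyx : y ≤ x := neg_le_neg_iff.1 (strictMono_Phi.le_iff_le.1 hαβ)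
  simpa only [heq x hα, heq y hβ] using antitoneOn_centralMass_mul_artanh_div_sq hy hx hyx
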